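/- Let Φ(E) be a holomorphic family of type-A of closed operators on a Hilbert space, defined on a domain Ω ⊆ ℂ symmetric about the real axis with common dense domain D₀, satisfying Φ(conj(E)) ⊆ Φ(E)* for all E ∈ Ω. If the set M = {E ∈ Ω : Φ(E)* = Φ(conj(E))} is nonempty, then M = Ω (Wüst's theorem). -/

import Mathlib

/-- The operator family with fixed domain `D₀` given by the linear maps `T E : D₀ →ₗ[ℂ] H`,
viewed as a family of partially defined operators (a type-A family has constant domain). -/
noncomputable def pmapFamily {H : Type*} [NormedAddCommGroup H] [InnerProductSpace ℂ H]
    (D₀ : Submodule ℂ H) (T : ℂ → (D₀ →ₗ[ℂ] H)) (E : ℂ) : H →ₗ.[ℂ] H :=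
  ⟨D₀, T E⟩

/-!
Let `A z : D → K` be closed with `A' z ⊆ (A z)*`. On the product of the domains with their graph
norms, `S z : (u, v) ↦ (v - A z u, A' z v + u)` is bounded. It is also bounded below, since the
graph of `A' z` is orthogonal to the rotated graph of `A z`; the orthogonal complement of the latter
being the graph of `(A z)*`, `S z` is surjective if and only if `A' z = (A z)*`.

By the closed graph theorem the graph norms for different `z` are equivalent, so all `S z` act on
one Banach space. They depend differentiably on `z` in the strong sense, hence continuously in
operator norm by uniform boundedness. Surjectivity of operators that are bounded below is stable
under small perturbations in both directions, hence constant on a connected parameter set.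
-/

open Asymptotics Filter Function Topology

section BoundedOperators

variable {𝕜 X Y : Type*} [NormedAddCommGroup X] [NormedAddCommGroup Y] [CompleteSpace X]

-- Otherwise there are `i n` with `‖f (i n)‖ > n * ‖g (i n)‖` along `l`; rescaling `f (i n)` to
-- norm `n` yields a pointwise bounded sequence that is not bounded in norm.
theorem isBigO_of_forall_isBigO_apply [RCLike 𝕜] [NormedSpace 𝕜 X] [NormedSpace 𝕜 Y]
    {ι W : Type*} [SeminormedAddCommGroup W] {l : Filter ι} [l.IsCountablyGenerated]
    {f : ι → X →L[𝕜] Y} {g : ι → W} (h : ∀ x, (fun i => f i x) =O[l] g) : f =O[l] g := by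
  by_contra hfg
  have hfreq (n : ℕ) : ∃ᶠ i in l, n * ‖g i‖ < ‖f i‖ := by
    simpa only [not_le] using not_eventually.1 fun hn => hfg (IsBigO.of_bound n hn)
  obtain ⟨s, hs⟩ := l.exists_antitone_basis
  choose i his hi using fun n => ((hfreq n).and_eventually (hs.mem n)).exists.imp fun _ => And.symm
  have hil : Tendsto i atTop l := hs.tendsto his
  have hpos (n : ℕ) : 0 < ‖f (i n)‖ := (by positivity : 0 ≤ n * ‖g (i n)‖).trans_lt (hi n)
  let F (n : ℕ) : X →L[𝕜] Y := ((n / ‖f (i n)‖ : ℝ) : 𝕜) • f (i n)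
  have hF (n : ℕ) : ‖F n‖ = n := by
    rw [norm_smul, RCLike.norm_ofReal, abs_of_nonneg (by positivity),
      div_mul_cancel₀ _ (hpos n).ne']
  have hFx (x : X) : ∃ C, ∀ n, ‖F n x‖ ≤ C := by
    refine isBigO_one_nat_atTop_iff.1 ?_
    obtain ⟨C, hC⟩ := ((h x).comp_tendsto hil).bound
    refine IsBigO.of_bound |C| (hC.mono fun n hn => ?_)
    calc ‖F n x‖ = n / ‖f (i n)‖ * ‖f (i n) x‖ := by
          rw [smul_apply, norm_smul, RCLike.norm_ofReal, abs_of_nonneg (by positivity)]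
      _ ≤ n / ‖f (i n)‖ * (|C| * ‖g (i n)‖) := by
          gcongr
          exact hn.trans (by gcongr; exacts [le_abs_self C, le_rfl])
      _ = |C| * (n * ‖g (i n)‖ / ‖f (i n)‖) := by ring
      _ ≤ |C| * ‖(1 : ℝ)‖ := by
          rw [norm_one]
          gcongr
          exact (div_le_one (hpos n)).2 (hi n).le
  obtain ⟨C, hC⟩ := banach_steinhaus hFx
  obtain ⟨n, hn⟩ := exists_nat_gt C
  exact (hn.trans_eq (hF n).symm).not_ge (hC n)

theorem continuousOn_of_forall_differentiableOn_apply [RCLike 𝕜] [NormedSpace 𝕜 X]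
    [NormedSpace 𝕜 Y] {𝕝 V : Type*} [NontriviallyNormedField 𝕝] [NormedSpace 𝕝 Y]
    [NormedAddCommGroup V] [NormedSpace 𝕝 V] {s : Set V} {f : V → X →L[𝕜] Y}
    (h : ∀ x, DifferentiableOn 𝕝 (fun z => f z x) s) : ContinuousOn f s := by
  intro a ha
  have hO : (fun z => f z - f a) =O[𝓝[s] a] fun z => z - a :=
    isBigO_of_forall_isBigO_apply fun x => (h x a ha).isBigO_sub
  have hlim : Tendsto (fun z => z - a) (𝓝[s] a) (𝓝 0) :=
    tendsto_sub_nhds_zero_iff.2 continuousWithinAt_id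
  exact tendsto_sub_nhds_zero_iff.1 (hO.trans_tendsto hlim)

variable [NontriviallyNormedField 𝕜] [NormedSpace 𝕜 X] [NormedSpace 𝕜 Y] [CompleteSpace Y]

theorem surjective_of_norm_sub_lt {f g : X →L[𝕜] Y} {K : NNReal} (hf : AntilipschitzWith K f)
    (hsurj : Surjective f) (hfg : K * ‖g - f‖ < 1) : Surjective g := by
  let e : X ≃L[𝕜] Y := .ofBijective f (LinearMap.ker_eq_bot.2 hf.injective)
    (LinearMap.range_eq_top.2 hsurj)
  have he : ‖(e.symm : Y →L[𝕜] X)‖ ≤ K := ContinuousLinearMap.opNorm_le_bound _ K.coe_nonneg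
    fun y => (ZeroHomClass.bound_of_antilipschitz f hf _).trans_eq
      (congrArg (K * ‖·‖) (e.apply_symm_apply y))
  have happrox : ApproximatesLinearOn g (e : X →L[𝕜] Y) Set.univ ‖g - f‖₊ :=
    LipschitzOnWith.approximatesLinearOn (g - f).lipschitz.lipschitzOnWith
  refine happrox.surjective (e.subsingleton_or_nnnorm_symm_pos.imp_right fun hpos => ?_)
  rw [NNReal.lt_inv_iff_mul_lt hpos.ne', ← NNReal.coe_lt_coe, mul_comm]
  exact (mul_le_mul_of_nonneg_right he (norm_nonneg _)).trans_lt hfg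

theorem eventually_surjective_iff {f : X →L[𝕜] Y} {K : NNReal} (hf : AntilipschitzWith K f) :
    ∀ᶠ g : X →L[𝕜] Y in 𝓝 f, (Surjective f ↔ Surjective g) := by
  have hnear : ∀ᶠ g in 𝓝 f, K * ‖g - f‖ < 1 / 2 := by
    have hcont : Continuous fun g : X →L[𝕜] Y => K * ‖g - f‖ := by fun_prop
    exact hcont.continuousAt.eventually_lt_const (by simp)
  filter_upwards [hnear] with g hg
  have hgK : AntilipschitzWith (2 * K) g := by
    refine AddMonoidHomClass.antilipschitz_of_bound g fun x => ?_
    have hx : ‖x‖ ≤ K * ‖g x‖ + 1 / 2 * ‖x‖ :=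
      calc ‖x‖ ≤ K * ‖f x‖ := ZeroHomClass.bound_of_antilipschitz f hf x
        _ ≤ K * (‖g x‖ + ‖g - f‖ * ‖x‖) := by
            gcongr
            exact (norm_le_norm_add_norm_sub _ _).trans (by gcongr; exact (g - f).le_opNorm x)
        _ = K * ‖g x‖ + K * ‖g - f‖ * ‖x‖ := by ring
        _ ≤ K * ‖g x‖ + 1 / 2 * ‖x‖ := by gcongr
    push_cast
    linarith
  refine ⟨fun h => surjective_of_norm_sub_lt hf h (by linarith),
    fun h => surjective_of_norm_sub_lt hgK h ?_⟩
  rw [norm_sub_rev]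
  push_cast
  linarith

theorem surjective_iff_of_isPreconnected {V : Type*} [TopologicalSpace V] {s : Set V}
    (hs : IsPreconnected s) {f : V → X →L[𝕜] Y} (hf : ContinuousOn f s)
    (hbelow : ∀ z ∈ s, ∃ K, AntilipschitzWith K (f z)) {a b : V} (ha : a ∈ s) (hb : b ∈ s) :
    Surjective (f a) ↔ Surjective (f b) :=
  hs.induction₂ (fun x y => Surjective (f x) ↔ Surjective (f y))
    (fun z hz => (hf z hz).eventually (eventually_surjective_iff (hbelow z hz).choose_spec))
    (fun _ _ _ _ _ _ => Iff.trans) (fun _ _ _ _ => Iff.symm) ha hb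

end BoundedOperators

section LinearRelations

variable {𝕜 H K : Type*} [RCLike 𝕜] [NormedAddCommGroup H] [InnerProductSpace 𝕜 H]
  [NormedAddCommGroup K] [InnerProductSpace 𝕜 K]

/-- For linear relations `G` from `H` to `K` and `G'` from `K` to `H`, the map
`((u, a), (v, b)) ↦ (v - a, b + u)`, whose range is the sum of `G'` and of `G` rotated by
`(u, a) ↦ (-a, u)`. The adjoint of `G` being the orthogonal complement of the rotated `G`, this
map detects whether a `G'` contained in the adjoint is all of it. -/
def graphSum (G : Submodule 𝕜 (H × K)) (G' : Submodule 𝕜 (K × H)) : G × G' →L[𝕜] K × H :=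
  ((-ContinuousLinearMap.snd 𝕜 H K).prod (.fst 𝕜 H K) ∘L G.subtypeL).coprod G'.subtypeL

variable {G : Submodule 𝕜 (H × K)} {G' : Submodule 𝕜 (K × H)}

theorem graphSum_apply (p : G × G') :
    graphSum G G' p = (p.2.1.1 - p.1.1.2, p.2.1.2 + p.1.1.1) :=
  Prod.ext (neg_add_eq_sub _ _) (add_comm _ _)

theorem norm_sq_graphSum (h : G' ≤ G.adjoint) (p : G × G') :
    ‖(graphSum G G' p).1‖ ^ 2 + ‖(graphSum G G' p).2‖ ^ 2 =
      ‖p.1.1.1‖ ^ 2 + ‖p.1.1.2‖ ^ 2 + (‖p.2.1.1‖ ^ 2 + ‖p.2.1.2‖ ^ 2) := by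
  obtain ⟨⟨⟨u, a⟩, hua⟩, ⟨⟨v, b⟩, hvb⟩⟩ := p
  have hadj : inner 𝕜 a v = inner 𝕜 u b :=
    sub_eq_zero.1 ((Submodule.mem_adjoint_iff G _).1 (h hvb) u a hua)
  rw [graphSum_apply, @norm_sub_sq 𝕜, @norm_add_sq 𝕜, inner_re_symm v, inner_re_symm b, hadj]
  ring

theorem antilipschitzWith_graphSum (h : G' ≤ G.adjoint) :
    AntilipschitzWith 2 (graphSum G G') := by
  refine AddMonoidHomClass.antilipschitz_of_bound _ fun p => ?_
  have hle (t : ℝ) (ht : t ^ 2 ≤ ‖p.1.1.1‖ ^ 2 + ‖p.1.1.2‖ ^ 2 +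
      (‖p.2.1.1‖ ^ 2 + ‖p.2.1.2‖ ^ 2)) : t ≤ 2 * ‖graphSum G G' p‖ := by
    refine le_of_sq_le_sq ?_ (by positivity)
    calc t ^ 2 ≤ ‖(graphSum G G' p).1‖ ^ 2 + ‖(graphSum G G' p).2‖ ^ 2 :=
          ht.trans_eq (norm_sq_graphSum h p).symm
      _ ≤ ‖graphSum G G' p‖ ^ 2 + ‖graphSum G G' p‖ ^ 2 := by
          gcongr
          exacts [norm_fst_le _, norm_snd_le _]
      _ ≤ (2 * ‖graphSum G G' p‖) ^ 2 := by linarith [sq_nonneg ‖graphSum G G' p‖]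
  refine max_le (max_le (hle ‖p.1.1.1‖ ?_) (hle ‖p.1.1.2‖ ?_))
    (max_le (hle ‖p.2.1.1‖ ?_) (hle ‖p.2.1.2‖ ?_)) <;>
  linarith [sq_nonneg ‖p.1.1.1‖, sq_nonneg ‖p.1.1.2‖, sq_nonneg ‖p.2.1.1‖, sq_nonneg ‖p.2.1.2‖]

variable [CompleteSpace H] [CompleteSpace K]

theorem surjective_graphSum_adjoint (hG : IsClosed (G : Set (H × K))) :
    Surjective (graphSum G G.adjoint) := by
  intro q
  let S : Submodule 𝕜 (WithLp 2 (K × H)) := G.comap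
    ((LinearEquiv.skewSwap 𝕜 K H).toLinearMap ∘ₗ (WithLp.linearEquiv 2 𝕜 (K × H)).toLinearMap)
  have hS : IsClosed (S : Set (WithLp 2 (K × H))) :=
    hG.preimage (f := fun w : WithLp 2 (K × H) => (-w.snd, w.fst)) (by fun_prop)
  have := hS.completeSpace_coe
  obtain ⟨s, hs, t, ht, hst⟩ := S.exists_add_mem_mem_orthogonal (WithLp.toLp 2 q)
  have htG : t.ofLp ∈ G.adjoint := by
    refine (Submodule.mem_adjoint_iff G _).2 fun a b hab => ?_
    have h : inner 𝕜 (WithLp.toLp 2 (b, -a)) t = 0 := ht _ (by simpa [S] using hab)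
    simpa [WithLp.prod_inner_apply, sub_eq_add_neg] using h
  refine ⟨(-⟨_, hs⟩, ⟨_, htG⟩), ?_⟩
  have hq : q = s.ofLp + t.ofLp := congrArg WithLp.ofLp hst
  rw [graphSum_apply, hq]
  ext <;> simp [add_comm]

theorem adjoint_eq_iff_surjective_graphSum (hG : IsClosed (G : Set (H × K)))
    (h : G' ≤ G.adjoint) : G.adjoint = G' ↔ Surjective (graphSum G G') := by
  refine ⟨fun heq => heq ▸ surjective_graphSum_adjoint hG, fun hsurj => le_antisymm ?_ h⟩
  intro q hq
  obtain ⟨p, hp⟩ := hsurj q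
  have heq : graphSum G G.adjoint (p.1, ⟨p.2, h p.2.2⟩) = graphSum G G.adjoint (0, ⟨q, hq⟩) := by
    simpa [graphSum_apply] using hp
  have hpq : (p.2 : K × H) = q := congrArg (fun x => (x.2 : K × H))
    ((antilipschitzWith_graphSum le_rfl).injective heq)
  exact hpq ▸ p.2.2

end LinearRelations

section GraphNorm

/-- The linear equivalence `x ↦ (x, f x)` from the domain of a partially defined operator `f` to
its graph. The graph norm on the domain is encoded as the norm of `f.graph` as a subspace of the
product. -/
def domainEquivGraph {R M N : Type*} [Ring R] [AddCommGroup M] [Module R M] [AddCommGroup N]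
    [Module R N] (f : M →ₗ.[R] N) : f.domain ≃ₗ[R] f.graph where
  toFun x := ⟨(x, f x), f.mem_graph x⟩
  map_add' x y := Subtype.ext (Prod.ext rfl (f.map_add x y))
  map_smul' c x := Subtype.ext (Prod.ext rfl (f.map_smul c x))
  invFun p := ⟨p.1.1, LinearPMap.mem_domain_of_mem_graph p.2⟩
  right_inv p := Subtype.ext (Prod.ext rfl (f.mem_graph_snd_inj' (f.mem_graph _) p.2 rfl))

variable {𝕜 X Y : Type*} [NontriviallyNormedField 𝕜]
  [NormedAddCommGroup X] [NormedSpace 𝕜 X] [CompleteSpace X]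
  [NormedAddCommGroup Y] [NormedSpace 𝕜 Y] [CompleteSpace Y]
  {D : Submodule 𝕜 X} {A B : D →ₗ[𝕜] Y}

theorem continuous_domainEquivGraph_symm_trans (hA : (LinearPMap.mk D A).IsClosed)
    (hB : (LinearPMap.mk D B).IsClosed) :
    Continuous ((domainEquivGraph (.mk D A)).symm ≪≫ₗ domainEquivGraph (.mk D B)) := by
  have := hA.completeSpace_coe
  have := hB.completeSpace_coe
  refine LinearMap.continuous_of_isClosed_graph
    ((domainEquivGraph (.mk D A)).symm ≪≫ₗ domainEquivGraph (.mk D B)).toLinearMap ?_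
  have hgraph : (((domainEquivGraph (.mk D A)).symm ≪≫ₗ
      domainEquivGraph (.mk D B)).toLinearMap.graph : Set _) =
        {p : (LinearPMap.mk D A).graph × (LinearPMap.mk D B).graph | p.1.1.1 = p.2.1.1} := by
    ext p
    refine (LinearMap.mem_graph_iff _ _).trans ⟨fun h => ?_, fun h => ?_⟩
    · exact congrArg (fun q : (LinearPMap.mk D B).graph => q.1.1) h.symm
    · exact Subtype.ext (Prod.ext h.symm
        (LinearPMap.mem_graph_snd_inj' _ p.2.2 (LinearPMap.mem_graph _ _) h.symm))
  rw [hgraph]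
  exact isClosed_eq (by fun_prop) (by fun_prop)

/-- The map `(x, A x) ↦ (x, B x)` as a continuous linear equivalence: closed operators between
Banach spaces with a common domain have equivalent graph norms on it. -/
noncomputable def graphEquiv (hA : (LinearPMap.mk D A).IsClosed)
    (hB : (LinearPMap.mk D B).IsClosed) :
    (LinearPMap.mk D A).graph ≃L[𝕜] (LinearPMap.mk D B).graph :=
  have := hA.completeSpace_coe
  have := hB.completeSpace_coe
  ((domainEquivGraph (.mk D A)).symm ≪≫ₗ
    domainEquivGraph (.mk D B)).toContinuousLinearEquivOfContinuous
      (continuous_domainEquivGraph_symm_trans hA hB)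

end GraphNorm

section ClosedOperators

variable {𝕜 H K : Type*} [RCLike 𝕜]
  [NormedAddCommGroup H] [InnerProductSpace 𝕜 H] [CompleteSpace H]
  [NormedAddCommGroup K] [InnerProductSpace 𝕜 K]

theorem graph_le_adjoint_graph {f : H →ₗ.[𝕜] K} {g : K →ₗ.[𝕜] H}
    (hdense : Dense (f.domain : Set H)) (hle : g ≤ f.adjoint) : g.graph ≤ f.graph.adjoint :=
  (LinearPMap.le_graph_of_le hle).trans_eq (LinearPMap.adjoint_graph_eq_graph_adjoint hdense)

variable [CompleteSpace K]

theorem adjoint_eq_iff_surjective_graphSum_graph {f : H →ₗ.[𝕜] K} {g : K →ₗ.[𝕜] H}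
    (hdense : Dense (f.domain : Set H)) (hf : f.IsClosed) (hle : g ≤ f.adjoint) :
    f.adjoint = g ↔ Surjective (graphSum f.graph g.graph) := by
  rw [← adjoint_eq_iff_surjective_graphSum hf (graph_le_adjoint_graph hdense hle),
    ← LinearPMap.adjoint_graph_eq_graph_adjoint hdense]
  exact ⟨congrArg LinearPMap.graph, LinearPMap.eq_of_eq_graph⟩

variable {D : Submodule 𝕜 H} {D' : Submodule 𝕜 K} {A B : D →ₗ[𝕜] K} {A' B' : D' →ₗ[𝕜] H}

/-- The map `graphSum` of the graphs of `B` and `B'`, with its source transported to the graphs of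
`A` and `A'`. Fixing `A` and `A'` while `B` and `B'` vary gives bounded operators on one common
Banach space. -/
noncomputable def transportedGraphSum (hA : (LinearPMap.mk D A).IsClosed)
    (hA' : (LinearPMap.mk D' A').IsClosed) (hB : (LinearPMap.mk D B).IsClosed)
    (hB' : (LinearPMap.mk D' B').IsClosed) :
    (LinearPMap.mk D A).graph × (LinearPMap.mk D' A').graph →L[𝕜] K × H :=
  graphSum (LinearPMap.mk D B).graph (LinearPMap.mk D' B').graph ∘L
    ((graphEquiv hA hB).prodCongr (graphEquiv hA' hB') : _ →L[𝕜] _)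

variable (hA : (LinearPMap.mk D A).IsClosed) (hA' : (LinearPMap.mk D' A').IsClosed)
  (hB : (LinearPMap.mk D B).IsClosed) (hB' : (LinearPMap.mk D' B').IsClosed)

theorem transportedGraphSum_apply
    (p : (LinearPMap.mk D A).graph × (LinearPMap.mk D' A').graph) :
    transportedGraphSum hA hA' hB hB' p =
      (p.2.1.1 - B ⟨p.1.1.1, LinearPMap.mem_domain_of_mem_graph p.1.2⟩,
        B' ⟨p.2.1.1, LinearPMap.mem_domain_of_mem_graph p.2.2⟩ + p.1.1.1) :=
  graphSum_apply _

theorem surjective_transportedGraphSum :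
    Surjective (transportedGraphSum hA hA' hB hB') ↔
      Surjective (graphSum (LinearPMap.mk D B).graph (LinearPMap.mk D' B').graph) :=
  ((graphEquiv hA hB).prodCongr (graphEquiv hA' hB')).surjective.of_comp_iff
    (graphSum (LinearPMap.mk D B).graph (LinearPMap.mk D' B').graph)

theorem exists_antilipschitzWith_transportedGraphSum (hdense : Dense (D : Set H))
    (hle : LinearPMap.mk D' B' ≤ (LinearPMap.mk D B).adjoint) :
    ∃ c, AntilipschitzWith c (transportedGraphSum hA hA' hB hB') :=
  ⟨_, (antilipschitzWith_graphSum (graph_le_adjoint_graph hdense hle)).comp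
    ((graphEquiv hA hB).prodCongr (graphEquiv hA' hB')).antilipschitz⟩

end ClosedOperators

theorem wust_selfAdjoint_family_general {𝕜 H K V : Type*} [RCLike 𝕜]
    [NormedAddCommGroup H] [InnerProductSpace 𝕜 H] [NormedSpace ℝ H] [CompleteSpace H]
    [NormedAddCommGroup K] [InnerProductSpace 𝕜 K] [NormedSpace ℝ K] [CompleteSpace K]
    [NormedAddCommGroup V] [NormedSpace ℝ V] {Ω : Set V} (hconn : IsPreconnected Ω)
    {D : Submodule 𝕜 H} (hdense : Dense (D : Set H)) {D' : Submodule 𝕜 K}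
    {A : V → D →ₗ[𝕜] K} {A' : V → D' →ₗ[𝕜] H}
    (hA : ∀ z ∈ Ω, (LinearPMap.mk D (A z)).IsClosed)
    (hA' : ∀ z ∈ Ω, (LinearPMap.mk D' (A' z)).IsClosed)
    (hdiff : ∀ u, DifferentiableOn ℝ (fun z => A z u) Ω)
    (hdiff' : ∀ v, DifferentiableOn ℝ (fun z => A' z v) Ω)
    (hle : ∀ z ∈ Ω, LinearPMap.mk D' (A' z) ≤ (LinearPMap.mk D (A z)).adjoint)
    (hne : {z ∈ Ω | (LinearPMap.mk D (A z)).adjoint = .mk D' (A' z)}.Nonempty) :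
    {z ∈ Ω | (LinearPMap.mk D (A z)).adjoint = .mk D' (A' z)} = Ω := by
  obtain ⟨z₀, hz₀, heq₀⟩ := hne
  have := (hA z₀ hz₀).completeSpace_coe
  have := (hA' z₀ hz₀).completeSpace_coe
  obtain ⟨S, hS⟩ : ∃ S : V → _ →L[𝕜] K × H, ∀ z (hz : z ∈ Ω), S z =
      transportedGraphSum (hA z₀ hz₀) (hA' z₀ hz₀) (hA z hz) (hA' z hz) := by
    classical exact ⟨fun z => if hz : z ∈ Ω then _ else 0, fun z hz => dif_pos hz⟩
  have hcont : ContinuousOn S Ω := continuousOn_of_forall_differentiableOn_apply fun p =>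
    (((hdiff _).const_sub _).prodMk ((hdiff' _).add_const _)).congr fun z hz =>
      (congrArg (· p) (hS z hz)).trans (transportedGraphSum_apply _ _ _ _ p)
  have hbelow (z) (hz : z ∈ Ω) : ∃ c, AntilipschitzWith c (S z) :=
    hS z hz ▸ exists_antilipschitzWith_transportedGraphSum _ _ _ _ hdense (hle z hz)
  have hiff (z) (hz : z ∈ Ω) :
      (LinearPMap.mk D (A z)).adjoint = .mk D' (A' z) ↔ Surjective (S z) := by
    rw [adjoint_eq_iff_surjective_graphSum_graph hdense (hA z hz) (hle z hz), hS z hz,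
      surjective_transportedGraphSum]
  exact Set.sep_eq_self_iff_mem_true.2 fun z hz => (hiff z hz).2 <|
    (surjective_iff_of_isPreconnected hconn hcont hbelow hz₀ hz).1 ((hiff z₀ hz₀).1 heq₀)

/-- Wüst's theorem: let `Φ(E) = pmapFamily D₀ T E` be a holomorphic family of type-A of
closed operators on a domain `Ω ⊆ ℂ` symmetric about the real axis, with common dense
domain `D₀` and `Φ(conj E) ⊆ Φ(E)*` for all `E ∈ Ω`.  If the set
`M = {E ∈ Ω : Φ(E)* = Φ(conj E)}` is nonempty, then `M = Ω`. -/
theorem wust_selfAdjoint_family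
    {H : Type*} [NormedAddCommGroup H] [InnerProductSpace ℂ H] [CompleteSpace H]
    (Ω : Set ℂ) (hopen : IsOpen Ω) (hconn : IsConnected Ω)
    (hsymm : ∀ E ∈ Ω, (starRingEnd ℂ) E ∈ Ω)
    (D₀ : Submodule ℂ H) (hdense : Dense (D₀ : Set H))
    (T : ℂ → (D₀ →ₗ[ℂ] H))
    (hclosed : ∀ E ∈ Ω, (pmapFamily D₀ T E).IsClosed)
    (hhol : ∀ u : D₀, DifferentiableOn ℂ (fun E => T E u) Ω)
    (hincl : ∀ E ∈ Ω, pmapFamily D₀ T ((starRingEnd ℂ) E) ≤ (pmapFamily D₀ T E).adjoint)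
    (hne : {E ∈ Ω | (pmapFamily D₀ T E).adjoint
        = pmapFamily D₀ T ((starRingEnd ℂ) E)}.Nonempty) :
    {E ∈ Ω | (pmapFamily D₀ T E).adjoint = pmapFamily D₀ T ((starRingEnd ℂ) E)} = Ω :=
  wust_selfAdjoint_family_general hconn.isPreconnected hdense hclosed
    (fun E hE => hclosed _ (hsymm E hE)) (fun u => (hhol u).restrictScalars ℝ)
    (fun u => ((hhol u).restrictScalars ℝ).comp Complex.conjCLE.differentiableOn hsymm) hincl hne
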